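/- Let a : ℕ → ℝ have finite range and let v : ℕ → V be any sequence with values in a set V. For each k ≥ 1 let M_k = max{a(ℓ) : 1 ≤ ℓ ≤ k}, let I_k = {ℓ ≤ k : a(ℓ) = M_k}, and for j = 1,…,|I_k| let ι_k(j) denote the j-th smallest element of I_k. Let S : ℕ → Set(ℕ) satisfy S(m) ⊆ {1,…,m} and S(m) ⊆ S(m+1) for every m ≥ 1 (Assumption (H3) on the selectors). Let k₁ be such that M_k = M_{k₁} for all k ≥ k₁. Then for every k ≥ k₁ the selected value set T_k = {v(ι_k(j)) : j ∈ S(|I_k|)} satisfies T_k ⊆ T_{k+1}. -/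

import Mathlib

/-!
If the first `k` and the first `l ≥ k` terms have the same maximum, then `I_l` arises from `I_k` by
adding indices larger than `k`. The increasing enumeration of `I_k` is therefore an initial segment
of that of `I_l`, so `ι_k` and `ι_l` agree on the positions `1, …, |I_k|`. By (H3) the selector at
step `k` uses only these positions, and the selector at step `l` keeps all of them.
-/

/-- The running maximum `M_k = max {a ℓ : 1 ≤ ℓ ≤ k}` of the first `k`
terms of the sequence `a` (for `k ≥ 1` the set is finite and nonempty,
so it coincides with `sSup`). -/
noncomputable def runningMax (a : ℕ → ℝ) (k : ℕ) : ℝ :=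
  sSup (a '' Set.Icc 1 k)

open Classical in
/-- The set `I_k` of maximizing indices among the first `k` terms, as a
finset. -/
noncomputable def argmaxFinset (a : ℕ → ℝ) (k : ℕ) : Finset ℕ :=
  (Finset.Icc 1 k).filter (fun ℓ => a ℓ = runningMax a k)

/-- `ι_k(j)`: the `j`-th smallest element of `I_k` (with `j` 1-indexed,
junk value `0` if `j` is out of range). -/
noncomputable def nthArgmax (a : ℕ → ℝ) (k j : ℕ) : ℕ :=
  ((argmaxFinset a k).sort (· ≤ ·)).getD (j - 1) 0

/-- The set `T_k = {v(ι_k(j)) : j ∈ S(|I_k|)}` of values selected by the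
selectors `S` from the maximizing indices at iteration `k`. -/
def selectedValues {V : Type*} (a : ℕ → ℝ) (v : ℕ → V) (S : ℕ → Set ℕ)
    (k : ℕ) : Set V :=
  (fun j => v (nthArgmax a k j)) '' S (argmaxFinset a k).card

section FinsetSort

variable {α : Type*} {s t : Finset α} (r : α → α → Prop) [DecidableRel r] [IsTrans α r]
  [Std.Antisymm r] [Std.Total r]

theorem sort_disjUnion (hd : Disjoint s t) (hst : ∀ x ∈ s, ∀ y ∈ t, r x y) :
    (s.disjUnion t hd).sort r = s.sort r ++ t.sort r := by
  have hperm : ((s.disjUnion t hd).sort r).Perm (s.sort r ++ t.sort r) := by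
    rw [← Multiset.coe_eq_coe, ← Multiset.coe_add]
    simp only [Finset.sort_eq, Finset.disjUnion_val]
  have hsorted : (s.sort r ++ t.sort r).Pairwise r :=
    List.pairwise_append.2 ⟨s.pairwise_sort r, t.pairwise_sort r, fun x hx y hy =>
      hst x ((Finset.mem_sort r).1 hx) y ((Finset.mem_sort r).1 hy)⟩
  exact hperm.eq_of_pairwise' (Finset.pairwise_sort _ r) hsorted

theorem sort_prefix_sort_of_subset (hst : s ⊆ t) (hr : ∀ x ∈ s, ∀ y ∈ t, y ∉ s → r x y) :
    s.sort r <+: t.sort r := by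
  classical
  refine ⟨(t \ s).sort r, ?_⟩
  rw [← sort_disjUnion r Finset.disjoint_sdiff fun x hx y hy =>
      hr x hx y (Finset.mem_sdiff.1 hy).1 (Finset.mem_sdiff.1 hy).2,
    Finset.disjUnion_eq_union, Finset.union_sdiff_of_subset hst]

end FinsetSort

section Argmax

variable {a : ℕ → ℝ} {k l : ℕ}

theorem mem_argmaxFinset {i : ℕ} :
    i ∈ argmaxFinset a k ↔ (1 ≤ i ∧ i ≤ k) ∧ a i = runningMax a k := by
  rw [argmaxFinset, Finset.mem_filter, Finset.mem_Icc]

theorem argmaxFinset_nonempty (hk : 1 ≤ k) : (argmaxFinset a k).Nonempty := by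
  obtain ⟨i, hi, hmax⟩ : runningMax a k ∈ a '' Set.Icc 1 k :=
    ((Set.nonempty_Icc.2 hk).image a).csSup_mem ((Set.finite_Icc 1 k).image a)
  exact ⟨i, mem_argmaxFinset.2 ⟨hi, hmax⟩⟩

theorem argmaxFinset_subset_of_runningMax_eq (hkl : k ≤ l)
    (hmax : runningMax a l = runningMax a k) : argmaxFinset a k ⊆ argmaxFinset a l := by
  intro i hi
  obtain ⟨⟨one_le, le_k⟩, hai⟩ := mem_argmaxFinset.1 hi
  exact mem_argmaxFinset.2 ⟨⟨one_le, le_k.trans hkl⟩, hai.trans hmax.symm⟩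

theorem sort_argmaxFinset_prefix_of_runningMax_eq (hkl : k ≤ l)
    (hmax : runningMax a l = runningMax a k) :
    (argmaxFinset a k).sort <+: (argmaxFinset a l).sort := by
  refine sort_prefix_sort_of_subset _ (argmaxFinset_subset_of_runningMax_eq hkl hmax) ?_
  intro i hi j hj hjk
  obtain ⟨⟨one_le, -⟩, haj⟩ := mem_argmaxFinset.1 hj
  have k_lt : k < j := by
    by_contra! j_le
    exact hjk (mem_argmaxFinset.2 ⟨⟨one_le, j_le⟩, haj.trans hmax⟩)
  exact (mem_argmaxFinset.1 hi).1.2.trans k_lt.le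

theorem nthArgmax_eq_of_runningMax_eq (hkl : k ≤ l) (hmax : runningMax a l = runningMax a k)
    {j : ℕ} (hj : j ∈ Set.Icc 1 (argmaxFinset a k).card) : nthArgmax a l j = nthArgmax a k j := by
  obtain ⟨tail, htail⟩ := sort_argmaxFinset_prefix_of_runningMax_eq hkl hmax
  have hlt : j - 1 < (argmaxFinset a k).sort.length := by
    rw [Finset.length_sort]
    exact Nat.sub_one_lt_of_le hj.1 hj.2
  rw [nthArgmax, nthArgmax, ← htail, List.getD_append _ _ _ _ hlt]

end Argmax

theorem selectedValues_monotone_general {V : Type*} (a : ℕ → ℝ) (v : ℕ → V) (S : ℕ → Set ℕ)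
    (hS1 : ∀ m : ℕ, 1 ≤ m → S m ⊆ Set.Icc 1 m)
    (hS2 : ∀ m : ℕ, 1 ≤ m → S m ⊆ S (m + 1))
    {k l : ℕ} (hk : 1 ≤ k) (hkl : k ≤ l) (hmax : runningMax a l = runningMax a k) :
    selectedValues a v S k ⊆ selectedValues a v S l := by
  have one_le_card : 1 ≤ (argmaxFinset a k).card := (argmaxFinset_nonempty hk).card_pos
  have card_le : (argmaxFinset a k).card ≤ (argmaxFinset a l).card :=
    Finset.card_le_card (argmaxFinset_subset_of_runningMax_eq hkl hmax)
  have selector_subset : S (argmaxFinset a k).card ⊆ S (argmaxFinset a l).card :=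
    monotoneOn_nat_Ici_of_le_succ hS2 one_le_card (one_le_card.trans card_le) card_le
  rintro _ ⟨j, hj, rfl⟩
  exact ⟨j, selector_subset hj,
    congrArg v (nthArgmax_eq_of_runningMax_eq hkl hmax (hS1 _ one_le_card hj))⟩

/-- Once the running maximum has stabilized, under Assumption (H3) on the
selectors (`S m ⊆ {1,…,m}` and `S m ⊆ S (m+1)`), the sets of selected
values are nondecreasing. -/
theorem selectedValues_monotone {V : Type*}
    (a : ℕ → ℝ) (hfin : (Set.range a).Finite) (v : ℕ → V)
    (S : ℕ → Set ℕ)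
    (hS1 : ∀ m : ℕ, 1 ≤ m → S m ⊆ Set.Icc 1 m)
    (hS2 : ∀ m : ℕ, 1 ≤ m → S m ⊆ S (m + 1))
    (k₁ : ℕ) (hk₁ : 1 ≤ k₁)
    (hstab : ∀ k : ℕ, k₁ ≤ k → runningMax a k = runningMax a k₁) :
    ∀ k : ℕ, k₁ ≤ k →
      selectedValues a v S k ⊆ selectedValues a v S (k + 1) := by
  intro k hk
  exact selectedValues_monotone_general a v S hS1 hS2 (hk₁.trans hk) k.le_succ
    ((hstab (k + 1) (hk.trans k.le_succ)).trans (hstab k hk).symm)
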